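/- Let (X,T) be a topological dynamical system and ρ a T-invariant Borel probability measure on X with discrete spectrum. Then there exists a metric d′ on X compatible with its topology such that for every ε > 0 there is m = m(ε) ∈ ℕ with S_n(d′,ρ,ε) ≤ m for all n ∈ ℕ; that is, the complexity function n ↦ S_n(d′,ρ,ε) is bounded for every ε > 0. -/

import Mathlib

open MeasureTheory Filter

/-- The averaged metric `d̄_n` associated with an arbitrary distance function `d`. -/
noncomputable def dbarOf {X : Type*} (d : X → X → ℝ) (T : X → X) (n : ℕ) (x y : X) : ℝ :=
  (∑ i ∈ Finset.range n, d (T^[i] x) (T^[i] y)) / n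

/-- The measure complexity function `S_n(d,ρ,ε)` with respect to an arbitrary
distance function `d`. -/
noncomputable def measureComplexityOf {X : Type*} [MeasurableSpace X] (d : X → X → ℝ)
    (T : X → X) (ρ : Measure X) (n : ℕ) (ε : ℝ) : ℕ :=
  sInf {m : ℕ | ∃ xs : Fin m → X,
    1 - ε < (ρ (⋃ i, {y | dbarOf d T n (xs i) y < ε})).toReal}

open scoped ENNReal

/-- A distance-like function has bounded mean complexity. -/
def BddCx {X : Type*} [MeasurableSpace X] (T : X → X) (ρ : Measure X) (F : X → X → ℝ) : Prop :=
  ∀ ε > (0 : ℝ), ∃ (ι : Type) (_ : Finite ι) (κ : X → ι), ∀ n : ℕ, ∃ G : Set X,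
    ρ Gᶜ ≤ ENNReal.ofReal ε ∧ ∀ x ∈ G, ∀ y ∈ G, κ x = κ y →
      ∑ i ∈ Finset.range n, F (T^[i] x) (T^[i] y) ≤ ε * n

section helpers

variable {X : Type*} [MeasurableSpace X] {T : X → X} {ρ : Measure X}

theorem BddCx.zero : BddCx T ρ (fun _ _ => 0) := by
  intro ε hε
  refine ⟨Unit, inferInstance, fun _ => (), fun n => ⟨Set.univ, by simp, fun x _ y _ _ => ?_⟩⟩
  simp; positivity

theorem BddCx.add {F F₁ F₂ : X → X → ℝ} (h₁ : BddCx T ρ F₁) (h₂ : BddCx T ρ F₂)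
    (h : ∀ x y, F x y ≤ F₁ x y + F₂ x y) : BddCx T ρ F := by
  intro ε hε
  obtain ⟨ι₁, _, κ₁, H₁⟩ := h₁ (ε / 2) (by positivity)
  obtain ⟨ι₂, _, κ₂, H₂⟩ := h₂ (ε / 2) (by positivity)
  refine ⟨ι₁ × ι₂, inferInstance, fun x => (κ₁ x, κ₂ x), fun n => ?_⟩
  obtain ⟨G₁, hG₁, K₁⟩ := H₁ n
  obtain ⟨G₂, hG₂, K₂⟩ := H₂ n
  refine ⟨G₁ ∩ G₂, ?_, fun x hx y hy hxy => ?_⟩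
  · rw [Set.compl_inter]
    calc ρ (G₁ᶜ ∪ G₂ᶜ) ≤ ρ G₁ᶜ + ρ G₂ᶜ := measure_union_le _ _
      _ ≤ ENNReal.ofReal (ε / 2) + ENNReal.ofReal (ε / 2) := add_le_add hG₁ hG₂
      _ = ENNReal.ofReal ε := by
        rw [← ENNReal.ofReal_add (by positivity) (by positivity)]; congr 1; ring
  · obtain ⟨e₁, e₂⟩ := Prod.mk.inj hxy
    have a := K₁ x hx.1 y hy.1 e₁
    have b := K₂ x hx.2 y hy.2 e₂
    have c : ∑ i ∈ Finset.range n, F (T^[i] x) (T^[i] y) ≤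
      ∑ i ∈ Finset.range n, F₁ (T^[i] x) (T^[i] y) + ∑ i ∈ Finset.range n, F₂ (T^[i] x) (T^[i] y) := by
      rw [← Finset.sum_add_distrib]
      exact Finset.sum_le_sum fun i _ => h _ _
    linarith

theorem BddCx.scale {F F₁ : X → X → ℝ} (h₁ : BddCx T ρ F₁) (C : ℝ) (hC : 1 ≤ C)
    (h : ∀ x y, F x y ≤ C * F₁ x y) : BddCx T ρ F := by
  intro ε hε
  have hC0 : 0 < C := by linarith
  obtain ⟨ι₁, _, κ₁, H₁⟩ := h₁ (ε / C) (by positivity)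
  refine ⟨ι₁, inferInstance, κ₁, fun n => ?_⟩
  obtain ⟨G₁, hG₁, K₁⟩ := H₁ n
  refine ⟨G₁, hG₁.trans (ENNReal.ofReal_le_ofReal (div_le_self hε.le hC)), fun x hx y hy hxy => ?_⟩
  calc ∑ i ∈ Finset.range n, F (T^[i] x) (T^[i] y)
      ≤ ∑ i ∈ Finset.range n, C * F₁ (T^[i] x) (T^[i] y) := Finset.sum_le_sum fun i _ => h _ _
    _ = C * ∑ i ∈ Finset.range n, F₁ (T^[i] x) (T^[i] y) := by rw [Finset.mul_sum]
    _ ≤ C * (ε / C * n) := mul_le_mul_of_nonneg_left (K₁ x hx y hy hxy) hC0.le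
    _ = ε * n := by field_simp

theorem BddCx.sum {J : Type*} (s : Finset J) {F : J → X → X → ℝ} (h : ∀ j, BddCx T ρ (F j)) :
    BddCx T ρ (fun x y => ∑ j ∈ s, F j x y) := by
  classical
  induction s using Finset.induction_on with
  | empty => simpa using BddCx.zero
  | insert a s ha ih =>
    exact (h a).add ih fun x y => by rw [Finset.sum_insert ha]

theorem BddCx.of_le_add {F : X → X → ℝ}
    (h : ∀ δ > (0 : ℝ), ∃ F₁, BddCx T ρ F₁ ∧ ∀ x y, F x y ≤ δ + F₁ x y) : BddCx T ρ F := by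
  intro ε hε
  obtain ⟨F₁, h₁, hF⟩ := h (ε / 2) (by positivity)
  obtain ⟨ι₁, _, κ₁, H₁⟩ := h₁ (ε / 2) (by positivity)
  refine ⟨ι₁, inferInstance, κ₁, fun n => ?_⟩
  obtain ⟨G₁, hG₁, K₁⟩ := H₁ n
  refine ⟨G₁, hG₁.trans (ENNReal.ofReal_le_ofReal (by linarith)), fun x hx y hy hxy => ?_⟩
  calc ∑ i ∈ Finset.range n, F (T^[i] x) (T^[i] y)
      ≤ ∑ i ∈ Finset.range n, (ε / 2 + F₁ (T^[i] x) (T^[i] y)) :=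
        Finset.sum_le_sum fun i _ => hF _ _
    _ = n * (ε / 2) + ∑ i ∈ Finset.range n, F₁ (T^[i] x) (T^[i] y) := by
        rw [Finset.sum_add_distrib]; simp
    _ ≤ ε * n := by linarith [K₁ x hx y hy hxy]

theorem BddCx.approx (hT : MeasurePreserving T ρ ρ) {f : X → ℂ} (hf : AEStronglyMeasurable f ρ)
    (h : ∀ η > (0 : ℝ), ∃ g : X → ℂ, AEStronglyMeasurable g ρ ∧
      BddCx T ρ (fun x y => ‖g x - g y‖) ∧ eLpNorm (f - g) 1 ρ ≤ ENNReal.ofReal η) :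
    BddCx T ρ (fun x y => ‖f x - f y‖) := by
  intro ε hε
  obtain ⟨g, hg, hgB, hfg⟩ := h ((ε / 3) * (ε / 3)) (by positivity)
  obtain ⟨ι₁, _, κ₁, H₁⟩ := hgB (ε / 3) (by positivity)
  refine ⟨ι₁, inferInstance, κ₁, fun n => ?_⟩
  obtain ⟨G₁, hG₁, K₁⟩ := H₁ n
  set G₂ : Set X := {x | ∑ i ∈ Finset.range n, ‖(f - g) (T^[i] x)‖ ≤ ε / 3 * n} with hG₂def
  have hG₂ : ρ G₂ᶜ ≤ ENNReal.ofReal (ε / 3) := by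
    rcases Nat.eq_zero_or_pos n with rfl | hn
    · simp [hG₂def]
    have hn' : (0 : ℝ) < n := by exact_mod_cast hn
    have hsub : G₂ᶜ ⊆ {x | ENNReal.ofReal (ε / 3 * n) ≤
        ∑ i ∈ Finset.range n, ‖(f - g) (T^[i] x)‖ₑ} := by
      intro x hx
      have hx' : ε / 3 * n < ∑ i ∈ Finset.range n, ‖(f - g) (T^[i] x)‖ := not_le.mp hx
      rw [Set.mem_ofPred_eq]
      have : ∑ i ∈ Finset.range n, ‖(f - g) (T^[i] x)‖ₑ =
          ENNReal.ofReal (∑ i ∈ Finset.range n, ‖(f - g) (T^[i] x)‖) := by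
        rw [ENNReal.ofReal_sum_of_nonneg (fun i _ => norm_nonneg _)]
        simp only [ofReal_norm]
      rw [this]
      exact ENNReal.ofReal_le_ofReal hx'.le
    have hmeas : ∀ i, AEMeasurable (fun x => ‖(f - g) (T^[i] x)‖ₑ) ρ := fun i =>
      ((hf.sub hg).enorm).comp_quasiMeasurePreserving (hT.iterate i).quasiMeasurePreserving
    have hint : ∫⁻ x, ∑ i ∈ Finset.range n, ‖(f - g) (T^[i] x)‖ₑ ∂ρ =
        n * eLpNorm (f - g) 1 ρ := by
      rw [lintegral_finsetSum' _ fun i _ => hmeas i]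
      have : ∀ i, ∫⁻ x, ‖(f - g) (T^[i] x)‖ₑ ∂ρ = eLpNorm (f - g) 1 ρ := by
        intro i
        rw [← eLpNorm_comp_measurePreserving (hf.sub hg) (hT.iterate i),
          eLpNorm_one_eq_lintegral_enorm]
        rfl
      simp only [this, Finset.sum_const, Finset.card_range, nsmul_eq_mul]
    have hM := mul_meas_ge_le_lintegral₀
      (Finset.aemeasurable_fun_sum (Finset.range n) fun i _ => hmeas i) (ENNReal.ofReal (ε / 3 * n))
    rw [hint] at hM
    have h3 : ENNReal.ofReal (ε / 3 * n) * ρ G₂ᶜ ≤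
        ENNReal.ofReal (ε / 3 * n) * ENNReal.ofReal (ε / 3) := by
      calc _ ≤ _ := by gcongr
        _ ≤ _ := hM
        _ ≤ n * ENNReal.ofReal (ε / 3 * (ε / 3)) := by gcongr
        _ = _ := by
          rw [← ENNReal.ofReal_natCast, ← ENNReal.ofReal_mul (by positivity),
            ← ENNReal.ofReal_mul (by positivity)]
          congr 1; ring
    refine (ENNReal.mul_le_mul_iff_right ?_ ENNReal.ofReal_ne_top).mp h3
    rw [Ne, ENNReal.ofReal_eq_zero, not_le]; positivity
  refine ⟨G₁ ∩ G₂, ?_, fun x hx y hy hxy => ?_⟩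
  · rw [Set.compl_inter]
    calc ρ (G₁ᶜ ∪ G₂ᶜ) ≤ ρ G₁ᶜ + ρ G₂ᶜ := measure_union_le _ _
      _ ≤ ENNReal.ofReal (ε / 3) + ENNReal.ofReal (ε / 3) := add_le_add hG₁ hG₂
      _ = ENNReal.ofReal (ε / 3 + ε / 3) := by
        rw [← ENNReal.ofReal_add (by positivity) (by positivity)]
      _ ≤ _ := ENNReal.ofReal_le_ofReal (by linarith)
  · have a := K₁ x hx.1 y hy.1 hxy
    have b : ∑ i ∈ Finset.range n, ‖(f - g) (T^[i] x)‖ ≤ ε / 3 * n := hx.2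
    have c : ∑ i ∈ Finset.range n, ‖(f - g) (T^[i] y)‖ ≤ ε / 3 * n := hy.2
    have key : ∀ u v, ‖f u - f v‖ ≤ ‖g u - g v‖ + ‖(f - g) u‖ + ‖(f - g) v‖ := by
      intro u v
      have : f u - f v = (g u - g v) + (f - g) u - (f - g) v := by
        simp only [Pi.sub_apply]; ring
      rw [this]
      exact (norm_sub_le _ _).trans (by gcongr; exact norm_add_le _ _)
    have := Finset.sum_le_sum (s := Finset.range n) fun i _ => key (T^[i] x) (T^[i] y)
    rw [Finset.sum_add_distrib, Finset.sum_add_distrib] at this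
    linarith

theorem BddCx.congr (hT : MeasurePreserving T ρ ρ) {f g : X → ℂ} (hf : AEStronglyMeasurable f ρ)
    (hfg : f =ᵐ[ρ] g) (hg : BddCx T ρ (fun x y => ‖g x - g y‖)) :
    BddCx T ρ (fun x y => ‖f x - f y‖) := by
  refine BddCx.approx hT hf fun η hη => ⟨g, hf.congr hfg, hg, ?_⟩
  have : f - g =ᵐ[ρ] 0 := by
    filter_upwards [hfg] with x hx
    simp [hx]
  rw [eLpNorm_congr_ae this]; simp

theorem BddCx.eigen [IsProbabilityMeasure ρ] (hT : MeasurePreserving T ρ ρ) (g : Lp ℂ 2 ρ)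
    (hg0 : g ≠ 0) (c : ℂ) (hc : (fun x => (g : X → ℂ) (T x)) =ᵐ[ρ] fun x => c * (g : X → ℂ) x) :
    BddCx T ρ (fun x y => ‖(g : X → ℂ) x - (g : X → ℂ) y‖) := by
  have hc1 : ‖c‖ₑ = 1 := by
    have h1 : eLpNorm (g ∘ T) 2 ρ = eLpNorm g 2 ρ :=
      eLpNorm_comp_measurePreserving (Lp.aestronglyMeasurable g) hT
    have h2 : eLpNorm (g ∘ T) 2 ρ = ‖c‖ₑ * eLpNorm g 2 ρ := by
      rw [← eLpNorm_const_smul]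
      exact eLpNorm_congr_ae hc
    rw [h2] at h1
    have h3 : eLpNorm g 2 ρ ≠ 0 := by
      intro h
      apply hg0
      rw [eLpNorm_eq_zero_iff (Lp.aestronglyMeasurable g) (by simp)] at h
      exact (Lp.eq_zero_iff_ae_eq_zero).mpr h
    exact (ENNReal.mul_eq_right h3 (Lp.eLpNorm_ne_top g)).mp h1
  have hc1 : ‖c‖ = 1 := by
    have := congrArg ENNReal.toReal hc1
    simpa using this
  have hiter : ∀ᵐ x ∂ρ, ∀ i : ℕ, (g : X → ℂ) (T^[i] x) = c ^ i * (g : X → ℂ) x := by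
    have h1 : ∀ᵐ x ∂ρ, ∀ i : ℕ, (g : X → ℂ) (T (T^[i] x)) = c * (g : X → ℂ) (T^[i] x) :=
      ae_all_iff.mpr fun i => (hT.iterate i).quasiMeasurePreserving.ae hc
    filter_upwards [h1] with x hx i
    induction i with
    | zero => simp
    | succ i ih => rw [Function.iterate_succ_apply', hx, ih, pow_succ]; ring
  intro ε hε
  -- bounded part
  have hR : ∃ R : ℕ, ρ {x | ¬ ‖(g : X → ℂ) x‖ ≤ R} ≤ ENNReal.ofReal ε := by
    have hanti : Antitone fun R : ℕ => {x | ¬ ‖(g : X → ℂ) x‖ ≤ R} := by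
      intro a b hab x hx hx'
      exact hx (hx'.trans (by exact_mod_cast hab))
    have hempty : ⋂ R : ℕ, {x | ¬ ‖(g : X → ℂ) x‖ ≤ R} = ∅ := by
      ext x
      simp only [Set.mem_iInter, Set.mem_ofPred_eq, Set.mem_empty_iff_false, iff_false]
      push Not
      exact exists_nat_ge _
    have ht := tendsto_measure_iInter_atTop (μ := ρ) (s := fun R : ℕ => {x | ¬ ‖(g : X → ℂ) x‖ ≤ R})
      (fun R => ((measurableSet_le (Lp.stronglyMeasurable g).measurable.norm
        measurable_const).compl).nullMeasurableSet) hanti ⟨0, measure_ne_top _ _⟩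
    rw [hempty, measure_empty] at ht
    have := (ht.eventually (gt_mem_nhds (ENNReal.ofReal_pos.mpr hε))).exists
    obtain ⟨R, hR⟩ := this
    exact ⟨R, hR.le⟩
  obtain ⟨R, hR⟩ := hR
  obtain ⟨t, htf, ht⟩ := Metric.totallyBounded_iff.mp
    (isCompact_closedBall (0 : ℂ) R).totallyBounded (ε / 2) (by positivity)
  have hch : ∀ x, ∃ z : Option t, ‖(g : X → ℂ) x‖ ≤ R →
      ∃ w : t, z = some w ∧ dist ((g : X → ℂ) x) w < ε / 2 := by
    intro x
    by_cases hx : ‖(g : X → ℂ) x‖ ≤ R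
    · have := ht (mem_closedBall_zero_iff.mpr hx)
      simp only [Set.mem_iUnion, Metric.mem_ball] at this
      obtain ⟨w, hw, hd⟩ := this
      exact ⟨some ⟨w, hw⟩, fun _ => ⟨⟨w, hw⟩, rfl, hd⟩⟩
    · exact ⟨none, fun h => absurd h hx⟩
  choose κ hκ using hch
  have : Finite t := htf
  refine ⟨Option t, inferInstance, κ, fun n => ?_⟩
  refine ⟨{x | ∀ i : ℕ, (g : X → ℂ) (T^[i] x) = c ^ i * (g : X → ℂ) x} ∩
    {x | ‖(g : X → ℂ) x‖ ≤ R}, ?_, fun x hx y hy hxy => ?_⟩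
  · rw [Set.compl_inter]
    refine (measure_union_le _ _).trans ?_
    have h0 : ρ {x | ∀ i : ℕ, (g : X → ℂ) (T^[i] x) = c ^ i * (g : X → ℂ) x}ᶜ = 0 :=
      mem_ae_iff.mp hiter
    rw [h0, zero_add]
    exact hR
  · obtain ⟨w, hw, hd⟩ := hκ x hx.2
    obtain ⟨w', hw', hd'⟩ := hκ y hy.2
    have hww : w = w' := by
      rw [hw, hw'] at hxy
      exact Option.some.inj hxy
    subst hww
    have hd2 : ‖(g : X → ℂ) x - (g : X → ℂ) y‖ ≤ ε := by
      rw [← dist_eq_norm]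
      linarith [dist_triangle_right ((g : X → ℂ) x) ((g : X → ℂ) y) w]
    calc ∑ i ∈ Finset.range n, ‖(g : X → ℂ) (T^[i] x) - (g : X → ℂ) (T^[i] y)‖
        ≤ ∑ i ∈ Finset.range n, ε := by
          refine Finset.sum_le_sum fun i _ => ?_
          rw [hx.1 i, hy.1 i, ← mul_sub, norm_mul, norm_pow, hc1, one_pow, one_mul]
          exact hd2
      _ = ε * n := by simp [mul_comm]

theorem BddCx.of_Lp [IsProbabilityMeasure ρ] (hT : MeasurePreserving T ρ ρ)
    (hds : (Submodule.span ℂ {g : Lp ℂ 2 ρ | g ≠ 0 ∧ ∃ c : ℂ,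
        (fun x => (g : X → ℂ) (T x)) =ᵐ[ρ] fun x => c * (g : X → ℂ) x}).topologicalClosure = ⊤)
    (f : Lp ℂ 2 ρ) : BddCx T ρ (fun x y => ‖(f : X → ℂ) x - (f : X → ℂ) y‖) := by
  have hspan : ∀ h ∈ Submodule.span ℂ {g : Lp ℂ 2 ρ | g ≠ 0 ∧ ∃ c : ℂ,
        (fun x => (g : X → ℂ) (T x)) =ᵐ[ρ] fun x => c * (g : X → ℂ) x},
      BddCx T ρ (fun x y => ‖(h : X → ℂ) x - (h : X → ℂ) y‖) := by
    intro h hh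
    induction hh using Submodule.span_induction with
    | mem g hg =>
      obtain ⟨hg0, c, hc⟩ := hg
      exact BddCx.eigen hT g hg0 c hc
    | zero =>
      refine BddCx.congr hT (Lp.aestronglyMeasurable _) (Lp.coeFn_zero ℂ 2 ρ) ?_
      simpa using BddCx.zero
    | add a b _ _ ha hb =>
      refine BddCx.congr hT (Lp.aestronglyMeasurable _) (Lp.coeFn_add a b) ?_
      refine ha.add hb fun x y => ?_
      simp only [Pi.add_apply]
      rw [add_sub_add_comm]
      exact norm_add_le _ _
    | smul c a _ ha =>
      refine BddCx.congr hT (Lp.aestronglyMeasurable _) (Lp.coeFn_smul c a) ?_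
      refine ha.scale (‖c‖ + 1) (by linarith [norm_nonneg c]) fun x y => ?_
      simp only [Pi.smul_apply]
      rw [← smul_sub, norm_smul]
      gcongr
      linarith
  refine BddCx.approx hT (Lp.aestronglyMeasurable f) fun η hη => ?_
  have hf : f ∈ (Submodule.span ℂ {g : Lp ℂ 2 ρ | g ≠ 0 ∧ ∃ c : ℂ,
        (fun x => (g : X → ℂ) (T x)) =ᵐ[ρ]
          fun x => c * (g : X → ℂ) x}).topologicalClosure := by rw [hds]; trivial
  obtain ⟨h, hh, hd⟩ := Metric.mem_closure_iff.mp hf η hη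
  refine ⟨h, Lp.aestronglyMeasurable h, hspan h hh, ?_⟩
  calc eLpNorm (f - h : X → ℂ) 1 ρ ≤ eLpNorm (f - h : X → ℂ) 2 ρ :=
        eLpNorm_le_eLpNorm_of_exponent_le (by norm_num)
          ((Lp.aestronglyMeasurable f).sub (Lp.aestronglyMeasurable h))
    _ = edist f h := (Lp.edist_def f h).symm
    _ ≤ ENNReal.ofReal η := by rw [edist_dist]; exact ENNReal.ofReal_le_ofReal hd.le

end helpers

theorem BddCx.dist' {X : Type*} [MetricSpace X] [CompactSpace X] [MeasurableSpace X] [BorelSpace X]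
    {T : X → X} {ρ : Measure X} [IsProbabilityMeasure ρ] (hT : MeasurePreserving T ρ ρ)
    (hds : (Submodule.span ℂ {g : Lp ℂ 2 ρ | g ≠ 0 ∧ ∃ c : ℂ,
        (fun x => (g : X → ℂ) (T x)) =ᵐ[ρ] fun x => c * (g : X → ℂ) x}).topologicalClosure = ⊤) :
    BddCx T ρ (fun x y => dist x y) := by
  refine BddCx.of_le_add fun δ hδ => ?_
  obtain ⟨t, htf, ht⟩ := Metric.totallyBounded_iff.mp
    (isCompact_univ (X := X)).totallyBounded (δ / 2) (by positivity)
  have hB : ∀ z : X, BddCx T ρ (fun x y => ‖((dist x z : ℝ) : ℂ) - ((dist y z : ℝ) : ℂ)‖) := by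
    intro z
    have hcont : Continuous fun x : X => ((dist x z : ℝ) : ℂ) := by fun_prop
    have hmem : MemLp (fun x : X => ((dist x z : ℝ) : ℂ)) 2 ρ := by
      refine MemLp.of_bound hcont.aestronglyMeasurable (Metric.diam (Set.univ : Set X))
        (Eventually.of_forall fun x => ?_)
      rw [Complex.norm_real, Real.norm_of_nonneg dist_nonneg]
      exact Metric.dist_le_diam_of_mem isCompact_univ.isBounded trivial trivial
    exact BddCx.congr hT hcont.aestronglyMeasurable hmem.coeFn_toLp.symm
      (BddCx.of_Lp hT hds (hmem.toLp _))
  refine ⟨_, BddCx.sum htf.toFinset hB, fun x y => ?_⟩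
  have := ht (Set.mem_univ x)
  simp only [Set.mem_iUnion, Metric.mem_ball] at this
  obtain ⟨z, hz, hd⟩ := this
  have h1 : ‖((dist x z : ℝ) : ℂ) - ((dist y z : ℝ) : ℂ)‖ ≤
      ∑ j ∈ htf.toFinset, ‖((dist x j : ℝ) : ℂ) - ((dist y j : ℝ) : ℂ)‖ :=
    Finset.single_le_sum (f := fun j => ‖((dist x j : ℝ) : ℂ) - ((dist y j : ℝ) : ℂ)‖)
      (fun _ _ => norm_nonneg _) (htf.mem_toFinset.mpr hz)
  have h2 : dist y z - dist x z ≤ ‖((dist x z : ℝ) : ℂ) - ((dist y z : ℝ) : ℂ)‖ := by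
    rw [← Complex.ofReal_sub, Complex.norm_real, Real.norm_eq_abs, abs_sub_comm]
    exact le_abs_self _
  linarith [dist_triangle_right x y z]

/-- If an invariant Borel probability measure `ρ` has discrete spectrum, then there is a
metric `d'` compatible with the topology of `X` for which the complexity function
`n ↦ S_n(d',ρ,ε)` is bounded for every `ε > 0`. -/
theorem bounded_complexity_of_discrete_spectrum
    {X : Type*} [MetricSpace X] [CompactSpace X] [MeasurableSpace X] [BorelSpace X]
    (T : X ≃ₜ X)
    (ρ : Measure X) (hρprob : IsProbabilityMeasure ρ)
    (hρinv : MeasurePreserving (T : X → X) ρ ρ)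
    (hds : (Submodule.span ℂ {g : Lp ℂ 2 ρ | g ≠ 0 ∧ ∃ c : ℂ,
        (fun x => (g : X → ℂ) ((T : X → X) x)) =ᵐ[ρ]
          fun x => c * (g : X → ℂ) x}).topologicalClosure = ⊤) :
    ∃ d' : X → X → ℝ,
      -- `d'` is a metric on `X` …
      (∀ x y, 0 ≤ d' x y) ∧ (∀ x y, d' x y = 0 ↔ x = y) ∧ (∀ x y, d' x y = d' y x) ∧
      (∀ x y z, d' x z ≤ d' x y + d' y z) ∧
      -- … compatible with the topology of `X` …
      (∀ x : X, (nhds x).HasBasis (fun ε : ℝ => 0 < ε) (fun ε => {y | d' x y < ε})) ∧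
      -- … whose complexity function is bounded for every `ε > 0`
      (∀ ε > (0 : ℝ), ∃ m : ℕ, ∀ n : ℕ,
        measureComplexityOf d' (T : X → X) ρ n ε ≤ m) := by
  refine ⟨fun x y => dist x y, fun _ _ => dist_nonneg, fun _ _ => dist_eq_zero, dist_comm,
    dist_triangle, fun x => ?_, fun ε hε => ?_⟩
  · have := Metric.nhds_basis_ball (x := x)
    convert this using 2 with r
    ext y
    rw [Metric.mem_ball, dist_comm]
    rfl
  obtain ⟨ι, hι, κ, H⟩ := BddCx.dist' hρinv hds (ε / 2) (by positivity)
  refine ⟨Nat.card ι, fun n => ?_⟩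
  obtain ⟨G, hG, K⟩ := H n
  refine Nat.sInf_le ?_
  have hne : Nonempty X := nonempty_of_isProbabilityMeasure ρ
  have hch : ∀ j : ι, ∃ x : X, (∃ z ∈ G, κ z = j) → x ∈ G ∧ κ x = j := by
    intro j
    by_cases h : ∃ z ∈ G, κ z = j
    · obtain ⟨z, hz⟩ := h
      exact ⟨z, fun _ => hz⟩
    · exact ⟨hne.some, fun h' => absurd h' h⟩
  choose p hp using hch
  let e := Finite.equivFin ι
  refine ⟨fun i => p (e.symm i), ?_⟩
  set U : Set X := ⋃ i, {y | dbarOf (fun x y => dist x y) T n (p (e.symm i)) y < ε} with hU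
  have hsub : G ⊆ U := by
    intro y hy
    refine Set.mem_iUnion.mpr ⟨e (κ y), ?_⟩
    obtain ⟨h1, h2⟩ := hp (κ y) ⟨y, hy, rfl⟩
    have h3 := K _ h1 y hy h2
    simp only [Equiv.symm_apply_apply, Set.mem_ofPred_eq, dbarOf]
    rcases Nat.eq_zero_or_pos n with rfl | hn
    · simpa using hε
    have hn' : (0 : ℝ) < n := by exact_mod_cast hn
    rw [div_lt_iff₀ hn']
    nlinarith
  have h1 : (1 : ENNReal) ≤ ρ U + ENNReal.ofReal (ε / 2) := by
    calc (1 : ENNReal) = ρ (U ∪ Gᶜ) := by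
          rw [← measure_univ (μ := ρ)]
          congr 1
          symm
          rw [Set.eq_univ_iff_forall]
          intro x
          by_cases hx : x ∈ G
          · exact Or.inl (hsub hx)
          · exact Or.inr hx
      _ ≤ ρ U + ρ Gᶜ := measure_union_le _ _
      _ ≤ _ := by gcongr
  have h2 := ENNReal.toReal_mono (by simp) h1
  rw [ENNReal.toReal_add (measure_ne_top _ _) ENNReal.ofReal_ne_top,
    ENNReal.toReal_ofReal (by positivity), ENNReal.toReal_one] at h2
  linarith
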